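/- arXiv:2510.04294 — 5 statements merged into one kernel-verified Lean document; each statement's English description precedes it below -/
import Mathlib

section
/- Let A and Ã be d×d Hermitian complex matrices with eigenvalues λ₀ ≤ λ₁ ≤ … ≤ λ_{d−1} and λ̃₀ ≤ λ̃₁ ≤ … ≤ λ̃_{d−1} respectively, and let {v_i} and {ṽ_i} be corresponding orthonormal eigenbases. Fix integers 0 ≤ l ≤ r ≤ d−1 and set Π = ∑_{i=l}^{r} v_i v_i† and Π̃ = ∑_{i=l}^{r} ṽ_i ṽ_i†. Define the eigengap Δ = min(λ_l − λ_{l−1}, λ_{r+1} − λ_r), with the conventions λ_{−1} = −∞ and λ_d = +∞. If Δ > ‖Ã − A‖, then ‖Π̃ − Π‖ · (Δ − ‖Ã − A‖) ≤ ‖Ã − A‖; equivalently, when Ã ≠ A, ‖Π̃ − Π‖ ≤ 1/(Δ ‖Ã − A‖^{−1} − 1). -/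
/-!
The Davis–Kahan bound with constant one. Write `ε = ‖A' - A‖`, let `P`, `P'` be the two spectral
projections and `δ = Δ - ε`. By Weyl's inequality (`weyl`) corresponding eigenvalues of `A` and `A'`
differ by at most `ε`, so the eigenvalues of `A'` with index outside `[l, r]` have distance at least
`δ` from the interval `[lam l, lam r]`, and likewise with `A` and `A'` exchanged.

The sin-theta estimate (`sin_theta`) then bounds `δ ‖(1 - P') P‖` and `δ ‖(1 - P) P'‖` by `ε`: with
`c` the midpoint and `ρ` the half-length of the interval and `Q = 1 - P'`, the identity
`(A' - c) Q P = Q (A' - A) P + Q P (A - c) P` gives `(ρ + δ) ‖Q P‖ ≤ ε + ρ ‖Q P‖`.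
Finally `(P' - P) x = P' (1 - P) x - (1 - P') P x` is an orthogonal decomposition, so Pythagoras
turns the two estimates into one for `‖P' - P‖` (`norm_proj_sub_le`).

All operators involved are diagonal in one of the two eigenbases, so the norm estimates reduce to
comparing multipliers (`norm_diagOp_le`).
-/

open Matrix

/-- The operator norm (largest singular value) of a complex matrix,
realized as the norm of the induced continuous linear endomorphism of
Euclidean space. -/
noncomputable def opNorm {d : ℕ} (A : Matrix (Fin d) (Fin d) ℂ) : ℝ :=
  ‖Matrix.toEuclideanCLM (𝕜 := ℂ) A‖

/-! ### Operators diagonal in an orthonormal basis -/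

section DiagonalOperators

variable {d : ℕ} {E : Type*} [NormedAddCommGroup E] [InnerProductSpace ℂ E]

/-- The operator that is diagonal in the orthonormal basis `b`, with real eigenvalues `f i`. -/
noncomputable def diagOp (b : OrthonormalBasis (Fin d) ℂ E) (f : Fin d → ℝ) : E →L[ℂ] E :=
  ∑ i, (f i : ℂ) • (innerSL ℂ (b i)).smulRight (b i)

lemma diagOp_basis (b : OrthonormalBasis (Fin d) ℂ E) (f : Fin d → ℝ) (j : Fin d) :
    diagOp b f (b j) = (f j : ℂ) • b j := by
  simp [diagOp, b.inner_eq_ite]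

lemma repr_diagOp (b : OrthonormalBasis (Fin d) ℂ E) (f : Fin d → ℝ) (x : E) (k : Fin d) :
    b.repr (diagOp b f x) k = (f k : ℂ) * b.repr x k := by
  have h : diagOp b f x = ∑ i, ((f i : ℂ) * b.repr x i) • b i := by
    simp [diagOp, b.repr_apply_apply, mul_smul]
  rw [h, b.repr_apply_apply, b.orthonormal.inner_right_fintype]

lemma clm_ext_basis (b : OrthonormalBasis (Fin d) ℂ E) {S T : E →L[ℂ] E}
    (h : ∀ i, S (b i) = T (b i)) : S = T := by
  have : (S : E →ₗ[ℂ] E) = T := b.toBasis.ext (by simpa using h)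
  exact ContinuousLinearMap.coe_injective this

lemma diagOp_mul (b : OrthonormalBasis (Fin d) ℂ E) (f g : Fin d → ℝ) (x : E) :
    diagOp b f (diagOp b g x) = diagOp b (fun i => f i * g i) x := by
  apply b.repr.injective
  ext k
  simp [repr_diagOp, mul_assoc]

lemma diagOp_sub (b : OrthonormalBasis (Fin d) ℂ E) (f g : Fin d → ℝ) (x : E) :
    diagOp b (fun i => f i - g i) x = diagOp b f x - diagOp b g x := by
  apply b.repr.injective
  ext k
  simp [repr_diagOp, sub_mul]

lemma diagOp_const (b : OrthonormalBasis (Fin d) ℂ E) (c : ℝ) (x : E) :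
    diagOp b (fun _ => c) x = (c : ℂ) • x := by
  apply b.repr.injective
  ext k
  rw [repr_diagOp, map_smul, PiLp.smul_apply, smul_eq_mul]

/-- Comparison of two diagonal operators on a vector; only the multipliers on the support of the
vector matter. -/
lemma norm_diagOp_le (b : OrthonormalBasis (Fin d) ℂ E) (f g : Fin d → ℝ) (x : E)
    (h : ∀ i, b.repr x i ≠ 0 → |f i| ≤ |g i|) : ‖diagOp b f x‖ ≤ ‖diagOp b g x‖ := by
  rw [← b.repr.norm_map, ← b.repr.norm_map (diagOp b g x), EuclideanSpace.norm_eq,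
    EuclideanSpace.norm_eq]
  refine Real.sqrt_le_sqrt (Finset.sum_le_sum fun i _ => ?_)
  rw [repr_diagOp, repr_diagOp, norm_mul, norm_mul, Complex.norm_real, Complex.norm_real]
  by_cases hx : b.repr x i = 0
  · simp [hx]
  · have := h i hx
    simp only [Real.norm_eq_abs]
    gcongr

lemma norm_smul_real (c : ℝ) (x : E) : ‖(c : ℂ) • x‖ = |c| * ‖x‖ := by
  rw [norm_smul, Complex.norm_real, Real.norm_eq_abs]

/-! ### Spectral projections -/

/-- The spectral projection onto the basis vectors with index in `S`. -/
noncomputable def projOn (b : OrthonormalBasis (Fin d) ℂ E) (S : Finset (Fin d)) : E →L[ℂ] E :=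
  diagOp b (fun i => if i ∈ S then 1 else 0)

lemma repr_projOn (b : OrthonormalBasis (Fin d) ℂ E) (S : Finset (Fin d)) (x : E) (k : Fin d) :
    b.repr (projOn b S x) k = if k ∈ S then b.repr x k else 0 := by
  rw [projOn, repr_diagOp]
  split_ifs <;> simp

lemma projOn_add_compl (b : OrthonormalBasis (Fin d) ℂ E) (S : Finset (Fin d)) (x : E) :
    projOn b S x + projOn b Sᶜ x = x := by
  apply b.repr.injective
  ext k
  by_cases h : k ∈ S <;> simp [repr_projOn, h]

lemma projOn_idem (b : OrthonormalBasis (Fin d) ℂ E) (S : Finset (Fin d)) (x : E) :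
    projOn b S (projOn b S x) = projOn b S x := by
  apply b.repr.injective
  ext k
  by_cases h : k ∈ S <;> simp [repr_projOn, h]

lemma projOn_diagOp (b : OrthonormalBasis (Fin d) ℂ E) (S : Finset (Fin d)) (f : Fin d → ℝ)
    (x : E) : projOn b S (diagOp b f x) = diagOp b f (projOn b S x) := by
  simp only [projOn, diagOp_mul, mul_comm]

lemma norm_projOn_le (b : OrthonormalBasis (Fin d) ℂ E) (S : Finset (Fin d)) (x : E) :
    ‖projOn b S x‖ ≤ ‖x‖ := by
  have h := norm_diagOp_le b (fun i => if i ∈ S then 1 else 0) (fun _ => 1) x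
    (fun i _ => by split_ifs <;> simp)
  rwa [diagOp_const, Complex.ofReal_one, one_smul] at h

lemma norm_sq_proj_add (b : OrthonormalBasis (Fin d) ℂ E) (S : Finset (Fin d)) (x y : E) :
    ‖projOn b S x + projOn b Sᶜ y‖ ^ 2 = ‖projOn b S x‖ ^ 2 + ‖projOn b Sᶜ y‖ ^ 2 := by
  simp only [← b.repr.norm_map, EuclideanSpace.norm_sq_eq, ← Finset.sum_add_distrib]
  refine Finset.sum_congr rfl fun k _ => ?_
  by_cases h : k ∈ S <;> simp [repr_projOn, h]

lemma projOn_symm (b : OrthonormalBasis (Fin d) ℂ E) (S : Finset (Fin d)) (x y : E) :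
    inner ℂ (projOn b S x) y = inner ℂ x (projOn b S y) := by
  rw [← b.repr.inner_map_map, ← b.repr.inner_map_map x, PiLp.inner_apply, PiLp.inner_apply]
  refine Finset.sum_congr rfl fun k _ => ?_
  by_cases h : k ∈ S <;> simp [repr_projOn, h]

/-- The projections are self-adjoint, so a product of two has the norm of the reversed product. -/
lemma norm_projOn_comm_le (b b' : OrthonormalBasis (Fin d) ℂ E) (S S' : Finset (Fin d)) {s : ℝ}
    (h : ∀ x, ‖projOn b S (projOn b' S' x)‖ ≤ s * ‖x‖) (x : E) :
    ‖projOn b' S' (projOn b S x)‖ ≤ s * ‖x‖ := by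
  set z := projOn b' S' (projOn b S x) with hz
  have h1 : ‖z‖ ^ 2 ≤ ‖x‖ * (s * ‖z‖) := by
    have : inner ℂ z z = inner ℂ x (projOn b S (projOn b' S' z)) := by
      rw [← projOn_symm b S x, ← projOn_symm b' S' (projOn b S x)]
    calc ‖z‖ ^ 2 = ‖(inner ℂ z z : ℂ)‖ := by
          rw [inner_self_eq_norm_sq_to_K]; simp
      _ ≤ ‖x‖ * ‖projOn b S (projOn b' S' z)‖ := by rw [this]; exact norm_inner_le_norm _ _
      _ ≤ _ := by gcongr; exact h z
  rcases (norm_nonneg z).eq_or_lt with h0 | h0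
  · have h2 := (norm_nonneg _).trans (h x)
    rw [← h0]; exact h2
  · nlinarith

/-! ### Eigenvalue and eigenspace perturbation -/

/-- **Weyl's inequality** in one direction. By a dimension count there is a nonzero vector both in
the span of the first `i + 1` eigenvectors of `diagOp b f` and in the span of the last `d - i`
eigenvectors of `diagOp b' f'`; the two operators are compared on it. -/
lemma weyl (b b' : OrthonormalBasis (Fin d) ℂ E) (f f' : Fin d → ℝ)
    (hf : Monotone f) (hf' : Monotone f') {ε : ℝ}
    (hε : ∀ x, ‖diagOp b' f' x - diagOp b f x‖ ≤ ε * ‖x‖) (i : Fin d) : f' i ≤ f i + ε := by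
  obtain ⟨x, hx0, hx, hx'⟩ : ∃ x : E, x ≠ 0 ∧ (∀ j, b.repr x j ≠ 0 → j ≤ i) ∧
      (∀ j, b'.repr x j ≠ 0 → i ≤ j) := by
    -- these are `d - 1` linear conditions, one for each index `j ≠ i`
    let L : E →ₗ[ℂ] ({j : Fin d // j ≠ i} → ℂ) := LinearMap.pi fun j =>
      if i < j.1 then b.toBasis.coord j else b'.toBasis.coord j
    have : FiniteDimensional ℂ E := b.toBasis.finiteDimensional_of_finite
    have hL : LinearMap.ker L ≠ ⊥ := by
      apply LinearMap.ker_ne_bot_of_finrank_lt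
      rw [Module.finrank_eq_card_basis b.toBasis, Module.finrank_fintype_fun_eq_card]
      exact Fintype.card_subtype_lt (x := i) (by simp)
    obtain ⟨x, hxL, hx0⟩ := Submodule.exists_mem_ne_zero_of_ne_bot hL
    have hL0 : ∀ j : {j : Fin d // j ≠ i}, L x j = 0 := fun j => by
      rw [LinearMap.mem_ker.1 hxL]; rfl
    refine ⟨x, hx0, fun j hj => ?_, fun j hj => ?_⟩
    · by_contra hlt
      push Not at hlt
      have := hL0 ⟨j, hlt.ne'⟩
      simp [L, hlt] at this
      exact hj this
    · by_contra hlt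
      push Not at hlt
      have := hL0 ⟨j, hlt.ne⟩
      simp [L, hlt.not_gt] at this
      exact hj this
  -- shifting both operators to be positive makes their norms on `x` comparable with `f i`, `f' i`
  let z : Fin d := ⟨0, i.pos⟩
  have hz : ∀ j, z ≤ j := fun j => Fin.mk_le_of_le_val (Nat.zero_le _)
  set c := min (f z) (f' z) with hc
  have hcf : ∀ j, c ≤ f j := fun j => (min_le_left _ _).trans (hf (hz j))
  have hcf' : ∀ j, c ≤ f' j := fun j => (min_le_right _ _).trans (hf' (hz j))
  have h1 := norm_diagOp_le b (fun j => f j - c) (fun _ => f i - c) x (fun j hj => by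
    rw [abs_of_nonneg (sub_nonneg.2 (hcf j)), abs_of_nonneg (sub_nonneg.2 (hcf i))]
    linarith [hf (hx j hj)])
  have h2 := norm_diagOp_le b' (fun _ => f' i - c) (fun j => f' j - c) x (fun j hj => by
    rw [abs_of_nonneg (sub_nonneg.2 (hcf' j)), abs_of_nonneg (sub_nonneg.2 (hcf' i))]
    linarith [hf' (hx' j hj)])
  rw [diagOp_const, norm_smul_real, abs_of_nonneg (sub_nonneg.2 (hcf _)), diagOp_sub b f (fun _ => c),
    diagOp_const] at h1
  rw [diagOp_const, norm_smul_real, abs_of_nonneg (sub_nonneg.2 (hcf' _)),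
    diagOp_sub b' f' (fun _ => c), diagOp_const] at h2
  have h3 : ‖diagOp b' f' x - (c : ℂ) • x‖ ≤
      ‖diagOp b' f' x - diagOp b f x‖ + ‖diagOp b f x - (c : ℂ) • x‖ :=
    norm_sub_le_norm_sub_add_norm_sub _ _ _
  have h4 : (f' i - c) * ‖x‖ ≤ (ε + (f i - c)) * ‖x‖ := by linarith [hε x]
  linarith [le_of_mul_le_mul_right h4 (norm_pos_iff.2 hx0)]

/-- The **sin-theta estimate**: eigenvalues of index in `S` lie in `[a, a']`, and those of the
other operator with index in `S'` have distance at least `δ` from this interval. -/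
lemma sin_theta (b b' : OrthonormalBasis (Fin d) ℂ E) (f f' : Fin d → ℝ) {ε δ a a' : ℝ}
    (hδ : 0 < δ) (haa : a ≤ a') (hε0 : 0 ≤ ε)
    (hε : ∀ x, ‖diagOp b' f' x - diagOp b f x‖ ≤ ε * ‖x‖) (S S' : Finset (Fin d))
    (hS : ∀ i ∈ S, a ≤ f i ∧ f i ≤ a') (hS' : ∀ i ∈ S', f' i ≤ a - δ ∨ a' + δ ≤ f' i) (x : E) :
    ‖projOn b' S' (projOn b S x)‖ ≤ ε / δ * ‖x‖ := by
  set c := (a + a') / 2 with hc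
  set ρ := (a' - a) / 2 with hρ
  have hρ0 : 0 ≤ ρ := by rw [hρ]; linarith
  set N := ‖projOn b' S' ∘L projOn b S‖ with hN
  have hNle : ∀ y, ‖projOn b' S' (projOn b S y)‖ ≤ N * ‖y‖ := fun y =>
    (projOn b' S' ∘L projOn b S).le_opNorm y
  have key : ∀ y, (ρ + δ) * ‖projOn b' S' (projOn b S y)‖ ≤ (ε + ρ * N) * ‖y‖ := by
    intro y
    set p := projOn b S y with hp
    set q := projOn b' S' p with hq
    have h1 := norm_diagOp_le b' (fun _ => ρ + δ) (fun i => f' i - c) q (fun i hi => by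
      have hi' : i ∈ S' := by
        by_contra h
        simp [hq, repr_projOn, h] at hi
      rw [abs_of_nonneg (by linarith), le_abs]
      rcases hS' i hi' with h | h
      · right; linarith
      · left; linarith)
    have h2 := norm_diagOp_le b (fun i => f i - c) (fun _ => ρ) p (fun i hi => by
      have hi' : i ∈ S := by
        by_contra h
        simp [hp, repr_projOn, h] at hi
      rw [abs_of_nonneg hρ0, abs_le]
      have := hS i hi'
      constructor <;> linarith)
    rw [diagOp_const, norm_smul_real, abs_of_nonneg (by linarith)] at h1
    rw [diagOp_const, norm_smul_real, abs_of_nonneg hρ0] at h2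
    have hpP : projOn b S (diagOp b (fun i => f i - c) p) = diagOp b (fun i => f i - c) p := by
      rw [projOn_diagOp, hp, projOn_idem]
    have h3 : diagOp b' (fun i => f' i - c) q =
        projOn b' S' (diagOp b' f' p - diagOp b f p) +
          projOn b' S' (projOn b S (diagOp b (fun i => f i - c) p)) := by
      rw [hpP, hq, ← projOn_diagOp, ← map_add, diagOp_sub b' f' (fun _ => c),
        diagOp_sub b f (fun _ => c), diagOp_const, diagOp_const]
      congr 1
      abel
    have hpy : ‖p‖ ≤ ‖y‖ := norm_projOn_le b S y
    have hN0 : 0 ≤ N := norm_nonneg _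
    calc (ρ + δ) * ‖q‖ ≤ _ := h1
      _ ≤ ‖projOn b' S' (diagOp b' f' p - diagOp b f p)‖ +
          ‖projOn b' S' (projOn b S (diagOp b (fun i => f i - c) p))‖ := by
        rw [h3]; exact norm_add_le _ _
      _ ≤ ε * ‖p‖ + N * (ρ * ‖p‖) := by
        refine add_le_add ((norm_projOn_le _ _ _).trans (hε p)) ((hNle _).trans ?_)
        gcongr
      _ = (ε + ρ * N) * ‖p‖ := by ring
      _ ≤ _ := by gcongr
  have hbound : N ≤ (ε + ρ * N) / (ρ + δ) := by
    refine ContinuousLinearMap.opNorm_le_bound _ (by positivity) fun y => ?_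
    rw [div_mul_eq_mul_div, le_div_iff₀ (by linarith), mul_comm]
    exact key y
  rw [le_div_iff₀ (by linarith)] at hbound
  have hfin : N ≤ ε / δ := by
    rw [le_div_iff₀ hδ]
    linarith
  exact (hNle x).trans (by gcongr)

/-- If each projection is small on the complement of the other, the projections are close, with the
same constant. -/
lemma norm_proj_sub_le (b b' : OrthonormalBasis (Fin d) ℂ E) (S : Finset (Fin d)) {s : ℝ}
    (hs : 0 ≤ s) (h : ∀ x, ‖projOn b' Sᶜ (projOn b S x)‖ ≤ s * ‖x‖)
    (h' : ∀ x, ‖projOn b Sᶜ (projOn b' S x)‖ ≤ s * ‖x‖) :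
    ‖projOn b' S - projOn b S‖ ≤ s := by
  refine ContinuousLinearMap.opNorm_le_bound _ hs fun x => ?_
  have hx := projOn_add_compl b S x
  set p := projOn b S x with hp
  set q := projOn b Sᶜ x with hq
  have h1 : ‖projOn b' Sᶜ (-p)‖ ≤ s * ‖p‖ := by
    have := h p
    rwa [hp, projOn_idem, ← hp, ← norm_neg, ← map_neg] at this
  have h2 : ‖projOn b' S q‖ ≤ s * ‖q‖ := by
    have := norm_projOn_comm_le b b' Sᶜ S h' q
    rwa [hq, projOn_idem] at this
  have hdec : (projOn b' S - projOn b S) x = projOn b' S q + projOn b' Sᶜ (-p) := by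
    have e1 : projOn b' S x = projOn b' S p + projOn b' S q := by rw [← map_add, hx]
    have e2 := projOn_add_compl b' S p
    rw [_root_.sub_apply, e1, ← hp, map_neg]
    nth_rewrite 2 [← e2]
    abel
  have hpyth : ‖x‖ ^ 2 = ‖p‖ ^ 2 + ‖q‖ ^ 2 := by
    rw [← norm_sq_proj_add, ← hp, ← hq, hx]
  rw [hdec]
  refine le_of_sq_le_sq ?_ (by positivity)
  rw [norm_sq_proj_add, mul_pow, hpyth]
  have := pow_le_pow_left₀ (norm_nonneg _) h1 2
  have := pow_le_pow_left₀ (norm_nonneg _) h2 2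
  linarith [mul_pow s ‖p‖ 2, mul_pow s ‖q‖ 2]

end DiagonalOperators

/-! ### From matrices to diagonal operators -/

lemma exists_eigenbasis {d : ℕ} (v : Fin d → (Fin d → ℂ))
    (h : ∀ i j, star (v i) ⬝ᵥ v j = if i = j then 1 else 0) :
    ∃ b : OrthonormalBasis (Fin d) ℂ (EuclideanSpace ℂ (Fin d)), ∀ i, b i = WithLp.toLp 2 (v i) := by
  have ho : Orthonormal ℂ (fun i => (WithLp.toLp 2 (v i) : EuclideanSpace ℂ (Fin d))) := by
    rw [orthonormal_iff_ite]
    intro i j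
    rw [EuclideanSpace.inner_toLp_toLp, dotProduct_comm, h]
  refine ⟨OrthonormalBasis.mk ho ?_, fun i => congrFun (OrthonormalBasis.coe_mk ho _) i⟩
  rw [ho.linearIndependent.span_eq_top_of_card_eq_finrank' (by simp)]

lemma toEuclideanCLM_eq_diagOp {d : ℕ} (b : OrthonormalBasis (Fin d) ℂ (EuclideanSpace ℂ (Fin d)))
    (v : Fin d → (Fin d → ℂ)) (hb : ∀ i, b i = WithLp.toLp 2 (v i))
    (A : Matrix (Fin d) (Fin d) ℂ) (f : Fin d → ℝ)
    (hA : ∀ i, A.mulVec (v i) = (f i : ℂ) • v i) :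
    Matrix.toEuclideanCLM (𝕜 := ℂ) A = diagOp b f := by
  refine clm_ext_basis b fun i => ?_
  rw [diagOp_basis, hb, Matrix.toEuclideanCLM_toLp, hA, WithLp.toLp_smul]

lemma toEuclideanCLM_proj {d : ℕ} (b : OrthonormalBasis (Fin d) ℂ (EuclideanSpace ℂ (Fin d)))
    (v : Fin d → (Fin d → ℂ)) (hb : ∀ i, b i = WithLp.toLp 2 (v i))
    (h : ∀ i j, star (v i) ⬝ᵥ v j = if i = j then 1 else 0) (S : Finset (Fin d)) :
    Matrix.toEuclideanCLM (𝕜 := ℂ) (∑ i ∈ S, vecMulVec (v i) (star (v i))) = projOn b S := by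
  refine toEuclideanCLM_eq_diagOp b v hb _ _ fun j => ?_
  rw [Matrix.sum_mulVec]
  simp [Matrix.vecMulVec_mulVec, h]

/-- **Davis–Kahan eigenspace perturbation theorem.**
Let `A` and `A'` be `d × d` Hermitian matrices with nondecreasing eigenvalue
listings `lam`, `lam'` and corresponding orthonormal eigenbases `v`, `v'`.
Fix `l ≤ r` and let `Π = ∑_{l ≤ i ≤ r} vᵢvᵢ†`, `Π̃ = ∑_{l ≤ i ≤ r} v'ᵢv'ᵢ†`.
If `Δ` is at most the eigengap `min (lam l - lam (l-1), lam (r+1) - lam r)`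
(with the conventions `lam (-1) = -∞`, `lam d = ∞`, expressed here by the two
gap hypotheses which are vacuous when `l = 0` resp. `r = d-1`) and
`Δ > ‖A' - A‖`, then `‖Π̃ - Π‖ * (Δ - ‖A' - A‖) ≤ ‖A' - A‖`, i.e.
`‖Π̃ - Π‖ ≤ 1 / (Δ ‖A' - A‖⁻¹ - 1)`. -/
theorem davis_kahan {d : ℕ} (A A' : Matrix (Fin d) (Fin d) ℂ)
    (hA : A.IsHermitian) (hA' : A'.IsHermitian)
    (lam lam' : Fin d → ℝ) (v v' : Fin d → (Fin d → ℂ))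
    (hmono : Monotone lam) (hmono' : Monotone lam')
    (hortho : ∀ i j, star (v i) ⬝ᵥ v j = if i = j then 1 else 0)
    (hortho' : ∀ i j, star (v' i) ⬝ᵥ v' j = if i = j then 1 else 0)
    (heig : ∀ i, A.mulVec (v i) = (lam i : ℂ) • v i)
    (heig' : ∀ i, A'.mulVec (v' i) = (lam' i : ℂ) • v' i)
    (l r : Fin d) (hlr : l ≤ r) (Δ : ℝ)
    (hgapL : ∀ i, i < l → Δ ≤ lam l - lam i)
    (hgapR : ∀ j, r < j → Δ ≤ lam j - lam r)
    (hgap : opNorm (A' - A) < Δ) :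
    opNorm ((∑ i ∈ Finset.Icc l r, vecMulVec (v' i) (star (v' i))) -
        (∑ i ∈ Finset.Icc l r, vecMulVec (v i) (star (v i)))) *
      (Δ - opNorm (A' - A)) ≤ opNorm (A' - A) := by
  obtain ⟨b, hb⟩ := exists_eigenbasis v hortho
  obtain ⟨b', hb'⟩ := exists_eigenbasis v' hortho'
  have hT := toEuclideanCLM_eq_diagOp b v hb A lam heig
  have hT' := toEuclideanCLM_eq_diagOp b' v' hb' A' lam' heig'
  have hε : ∀ x, ‖diagOp b' lam' x - diagOp b lam x‖ ≤ opNorm (A' - A) * ‖x‖ := by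
    intro x
    rw [opNorm, map_sub, hT, hT']
    exact (diagOp b' lam' - diagOp b lam).le_opNorm x
  have hε' : ∀ x, ‖diagOp b lam x - diagOp b' lam' x‖ ≤ opNorm (A' - A) * ‖x‖ := fun x => by
    rw [norm_sub_rev]; exact hε x
  have hε0 : 0 ≤ opNorm (A' - A) := norm_nonneg _
  rw [opNorm, map_sub, toEuclideanCLM_proj b v hb hortho, toEuclideanCLM_proj b' v' hb' hortho']
  set ε := opNorm (A' - A)
  have hδ : 0 < Δ - ε := sub_pos.2 hgap
  have hW := weyl b b' lam lam' hmono hmono' hε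
  have hW' := weyl b' b lam' lam hmono' hmono hε'
  rw [← le_div_iff₀ hδ]
  refine norm_proj_sub_le b b' _ (by positivity) (fun x => ?_) (fun x => ?_)
  · refine sin_theta b b' lam lam' hδ (hmono hlr) hε0 hε _ _ (fun i hi => ?_) (fun i hi => ?_) x
    · rw [Finset.mem_Icc] at hi
      exact ⟨hmono hi.1, hmono hi.2⟩
    · rw [Finset.mem_compl, Finset.mem_Icc, not_and_or, not_le, not_le] at hi
      refine hi.imp (fun h => ?_) (fun h => ?_)
      · linarith [hgapL i h, hW i]
      · linarith [hgapR i h, hW' i]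
  · refine sin_theta b' b lam' lam hδ (hmono' hlr) hε0 hε' _ _ (fun i hi => ?_) (fun i hi => ?_) x
    · rw [Finset.mem_Icc] at hi
      exact ⟨hmono' hi.1, hmono' hi.2⟩
    · rw [Finset.mem_compl, Finset.mem_Icc, not_and_or, not_le, not_le] at hi
      refine hi.imp (fun h => ?_) (fun h => ?_)
      · linarith [hgapL i h, hW' l]
      · linarith [hgapR i h, hW r]
end

section
/- Let a < b be real numbers, let c be a real number with c ∉ [a,b], and let N ≥ 1 be an integer. Set z = (a + b − 2c)/(b − a), so that |z| > 1. Then the minimum, over all real polynomials p of degree at most N satisfying p(c) = 1, of sup_{x ∈ [a,b]} |p(x)| equals 1/T_N(|z|), and it is attained by the polynomial p(x) = T_N((a + b − 2x)/(b − a)) / T_N((a + b − 2c)/(b − a)). -/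
/-!
After an affine change of variable the interval becomes `[-1, 1]` and `c` becomes `|z| ≥ 1`; for
`z < 0` the change of variable includes a reflection. The lower bound is then the extremal growth
property of Chebyshev polynomials,
`Polynomial.Chebyshev.eval_iterate_derivative_le_of_forall_abs_le_one` with no derivative taken:
a polynomial of degree at most `N` bounded by `1` on `[-1, 1]` is at most `T_N` on `[1, ∞)`.
Applied to `p / M` for every `M` exceeding the supremum of `|p|`, it gives `1 / M ≤ T_N |z|`.
The supremum for the transported and normalised `T_N` is attained at the endpoint `a`, which
corresponds to `T_N 1 = 1`; its value is `1 / |T_N z| = 1 / T_N |z|` by the parity of `T_N`.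
-/

open Polynomial

lemma abs_eval_T_eq_eval_T_abs (N : ℕ) {z : ℝ} (hz : 1 ≤ |z|) :
    |(Chebyshev.T ℝ N).eval z| = (Chebyshev.T ℝ N).eval |z| := by
  have hpos : 0 ≤ (Chebyshev.T ℝ N).eval |z| :=
    zero_le_one.trans (Chebyshev.one_le_eval_T_real N hz)
  rcases abs_choice z with h | h
  · rw [h] at hpos ⊢
    exact abs_of_nonneg hpos
  · rw [← abs_of_nonneg hpos, h, Chebyshev.T_eval_neg]
    simp [abs_mul]

lemma degree_comp_linear_le {p : ℝ[X]} {N : ℕ} (hp : p.degree ≤ N) (u v : ℝ) :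
    (p.comp (C u * X + C v)).degree ≤ N := by
  rw [← natDegree_le_iff_degree_le] at hp ⊢
  calc (p.comp (C u * X + C v)).natDegree
      ≤ p.natDegree * (C u * X + C v).natDegree := natDegree_comp_le
    _ ≤ N * 1 := Nat.mul_le_mul hp natDegree_linear_le
    _ = N := mul_one N

/-- The extremal growth of `T_N` transported from `[-1, 1]` to `[a, b]`, on both sides of the
interval. -/
lemma eval_le_mul_eval_T {a b c M : ℝ} (hab : a < b) {N : ℕ}
    (hz : 1 ≤ |(a + b - 2 * c) / (b - a)|) {p : ℝ[X]} (hp : p.degree ≤ N) (hM : 0 < M)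
    (hbd : ∀ x ∈ Set.Icc a b, |p.eval x| ≤ M) :
    p.eval c ≤ M * (Chebyshev.T ℝ N).eval |(a + b - 2 * c) / (b - a)| := by
  have hba : 0 < b - a := sub_pos.2 hab
  set z := (a + b - 2 * c) / (b - a) with hzdef
  have hzc : z * (b - a) = a + b - 2 * c := div_mul_cancel₀ _ hba.ne'
  -- `s` is the sign of `z`; the substitution `x = (a + b - s * (b - a) * t) / 2` maps `|z|` to `c`.
  obtain ⟨s, hs, hsz⟩ : ∃ s : ℝ, |s| = 1 ∧ s * |z| = z := by
    rcases abs_choice z with h | h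
    · exact ⟨1, by simp, by rw [h, one_mul]⟩
    · exact ⟨-1, by simp, by rw [h]; ring⟩
  set q : ℝ[X] := C M⁻¹ * p.comp (C (-(s * (b - a) / 2)) * X + C ((a + b) / 2)) with hq
  have hqe (t : ℝ) : q.eval t = M⁻¹ * p.eval ((a + b - s * t * (b - a)) / 2) := by
    simp only [hq, eval_mul, eval_comp, eval_add, eval_C, eval_X]
    congr 2
    ring
  have hqdeg : q.degree ≤ N := by
    rw [hq, degree_C_mul (inv_ne_zero hM.ne')]
    exact degree_comp_linear_le hp _ _
  have hqbd : ∀ t ∈ Set.Icc (-1 : ℝ) 1, |q.eval t| ≤ 1 := by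
    intro t ht
    have hst : |s * t| ≤ 1 := by
      rw [abs_mul, hs, one_mul]
      exact abs_le.2 ht
    obtain ⟨h1, h2⟩ := abs_le.1 hst
    rw [hqe, abs_mul, abs_of_pos (inv_pos.2 hM), inv_mul_le_one₀ hM]
    exact hbd _ ⟨by nlinarith, by nlinarith⟩
  have key := Chebyshev.eval_iterate_derivative_le_of_forall_abs_le_one (k := 0) hz hqdeg hqbd
  simp only [Function.iterate_zero, id_eq] at key
  rw [hqe, hsz, hzc, show (a + b - (a + b - 2 * c)) / 2 = c by ring,
    inv_mul_le_iff₀ hM] at key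
  exact key

/-- **Chebyshev minimax property on an interval.**
Let `a < b`, let `c ∉ [a,b]`, and let `N ≥ 1`. With `z = (a+b-2c)/(b-a)` one has `|z| > 1`,
and the minimum over all real polynomials `p` of degree at most `N` with `p c = 1` of
`sup_{x ∈ [a,b]} |p x|` equals `1 / T_N |z|`; moreover it is attained by the polynomial
`x ↦ T_N ((a+b-2x)/(b-a)) / T_N ((a+b-2c)/(b-a))`. -/
theorem chebyshev_minimax_interval (a b c : ℝ) (hab : a < b) (hc : c ∉ Set.Icc a b)
    (N : ℕ) (hN : 1 ≤ N) :
    1 < |(a + b - 2 * c) / (b - a)| ∧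
    IsLeast
      {s : ℝ | ∃ p : ℝ[X], p.degree ≤ (N : ℕ) ∧ p.eval c = 1 ∧
        s = sSup ((fun x => |p.eval x|) '' Set.Icc a b)}
      (1 / (Polynomial.Chebyshev.T ℝ N).eval |(a + b - 2 * c) / (b - a)|) ∧
    ∃ p : ℝ[X], p.degree ≤ (N : ℕ) ∧ p.eval c = 1 ∧
      (∀ x : ℝ, p.eval x =
        (Polynomial.Chebyshev.T ℝ N).eval ((a + b - 2 * x) / (b - a)) /
          (Polynomial.Chebyshev.T ℝ N).eval ((a + b - 2 * c) / (b - a))) ∧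
      sSup ((fun x => |p.eval x|) '' Set.Icc a b) =
        1 / (Polynomial.Chebyshev.T ℝ N).eval |(a + b - 2 * c) / (b - a)| := by
  have hba : 0 < b - a := sub_pos.2 hab
  have hz : 1 < |(a + b - 2 * c) / (b - a)| := by
    rw [abs_div, abs_of_pos hba, one_lt_div hba, lt_abs]
    by_contra! h
    exact hc ⟨by linarith [h.1], by linarith [h.2]⟩
  have hTabs := abs_eval_T_eq_eval_T_abs N hz.le
  have hTpos : 0 < (Chebyshev.T ℝ N).eval |(a + b - 2 * c) / (b - a)| :=
    zero_lt_one.trans_le (Chebyshev.one_le_eval_T_real N hz.le)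
  have hTne : (Chebyshev.T ℝ N).eval ((a + b - 2 * c) / (b - a)) ≠ 0 :=
    abs_pos.1 (hTabs ▸ hTpos)
  have hex : ∃ p : ℝ[X], p.degree ≤ (N : ℕ) ∧ p.eval c = 1 ∧
      (∀ x : ℝ, p.eval x =
        (Polynomial.Chebyshev.T ℝ N).eval ((a + b - 2 * x) / (b - a)) /
          (Polynomial.Chebyshev.T ℝ N).eval ((a + b - 2 * c) / (b - a))) ∧
      sSup ((fun x => |p.eval x|) '' Set.Icc a b) =
        1 / (Polynomial.Chebyshev.T ℝ N).eval |(a + b - 2 * c) / (b - a)| := by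
    set D := (Chebyshev.T ℝ N).eval ((a + b - 2 * c) / (b - a)) with hD
    set p : ℝ[X] := C D⁻¹ * (Chebyshev.T ℝ N).comp (C (-2 / (b - a)) * X + C ((a + b) / (b - a)))
      with hp
    have hpe (x : ℝ) : p.eval x = (Chebyshev.T ℝ N).eval ((a + b - 2 * x) / (b - a)) / D := by
      simp only [hp, eval_mul, eval_comp, eval_add, eval_C, eval_X]
      rw [div_eq_inv_mul _ D]
      congr 2
      ring
    refine ⟨p, ?_, ?_, hpe, ?_⟩
    · rw [hp, degree_C_mul (inv_ne_zero hTne)]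
      exact degree_comp_linear_le (by simp [Chebyshev.degree_T]) _ _
    · rw [hpe, ← hD, div_self hTne]
    · refine IsGreatest.csSup_eq ⟨⟨a, ⟨le_rfl, hab.le⟩, ?_⟩, ?_⟩
      · have h1 : (a + b - 2 * a) / (b - a) = 1 := by
          rw [div_eq_one_iff_eq hba.ne']
          ring
        simp only [hpe, h1, Chebyshev.T_eval_one, abs_div, abs_one, hTabs]
      · rintro _ ⟨x, hx, rfl⟩
        beta_reduce
        rw [hpe, abs_div, hTabs]
        refine div_le_div_of_nonneg_right ?_ hTpos.le
        refine Chebyshev.abs_eval_T_real_le_one N ?_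
        rw [abs_div, abs_of_pos hba, div_le_one hba, abs_le]
        exact ⟨by linarith [hx.2], by linarith [hx.1]⟩
  refine ⟨hz, ⟨?_, ?_⟩, hex⟩
  · obtain ⟨p, hdeg, hpc, -, hsup⟩ := hex
    exact ⟨p, hdeg, hpc, hsup.symm⟩
  · rintro _ ⟨p, hdeg, hpc, rfl⟩
    have hbdd : BddAbove ((fun x => |p.eval x|) '' Set.Icc a b) :=
      isCompact_Icc.bddAbove_image p.continuous.abs.continuousOn
    -- Bounding by each `M` above the supremum avoids having to show that the supremum is nonzero.
    refine le_of_forall_gt_imp_ge_of_dense fun M hM => ?_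
    have hbd : ∀ x ∈ Set.Icc a b, |p.eval x| ≤ M := fun x hx =>
      (le_csSup hbdd ⟨x, hx, rfl⟩).trans hM.le
    have hM0 : 0 < M :=
      ((abs_nonneg _).trans (le_csSup hbdd ⟨a, ⟨le_rfl, hab.le⟩, rfl⟩)).trans_lt hM
    have h := eval_le_mul_eval_T hab hz.le hdeg hM0 hbd
    rw [hpc] at h
    exact (div_le_iff₀ hTpos).2 h
end

section
/- Let N ≥ 1 be an integer and let 0 < Δ < 1. Then the minimum, over all real polynomials p of degree at most 2N satisfying p(0) = 1, of sup_{Δ ≤ |x| ≤ 1} |p(x)| equals 1/T_N((1 + Δ²)/(1 − Δ²)), and it is attained by the even polynomial p(x) = T_N((Δ² + 1 − 2x²)/(1 − Δ²)) / T_N((1 + Δ²)/(1 − Δ²)). -/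
/-!
The substitution `t = x ^ 2` reduces the two-interval problem to one interval. If `p` competes, then
so does its even part `(p x + p (-x)) / 2`, whose sup norm is no larger; it has the form
`q (x ^ 2)` with `q = contract 2 p` of degree at most `N`, so that `|q| ≤ ‖p‖` on `[Δ², 1]` and
`q 0 = 1` (`eval_sq_contract_two`, `degree_contract_two_le`). The decreasing affine map
`y ↦ (1 + Δ²) / 2 - (1 - Δ²) / 2 * y` carries `[-1, 1]` onto `[Δ², 1]` and
`a = (1 + Δ²) / (1 - Δ²) > 1` to `0`. The classical extremal property of `T_N` outside `[-1, 1]`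
(a polynomial of degree at most `N` bounded by `1` on `[-1, 1]` is at most `T_N a` at `a`), which
is Mathlib's `eval_iterate_derivative_le_of_forall_abs_le_one` for the derivative of order `0`,
then gives `1 ≤ ‖p‖ * T_N a` (`one_div_eval_T_le`).

Conversely, for the proposed filter the argument `(Δ² + 1 - 2 x²) / (1 - Δ²)` lies in `[-1, 1]`
when `Δ ≤ |x| ≤ 1`, so `|T_N| ≤ 1` there, with equality at `x = Δ`, where the argument is `1`
(`isGreatest_filter`).
-/

open Polynomial

/-- Contraction by `2` extracts the even part: `(contract 2 p)(x²) = (p x + p (-x)) / 2`. -/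
lemma eval_sq_contract_two (p : ℝ[X]) (x : ℝ) :
    (contract 2 p).eval (x ^ 2) = (p.eval x + p.eval (-x)) / 2 := by
  have key : expand ℝ 2 (contract 2 p) = C (1 / 2) * (p + p.comp (-X)) := by
    ext n
    rw [coeff_expand two_pos, coeff_C_mul, coeff_add,
      show (-X : ℝ[X]) = C (-1) * X by simp, comp_C_mul_X_coeff]
    split_ifs with h
    · rw [coeff_contract two_ne_zero, Nat.div_mul_cancel h,
        (even_iff_two_dvd.mpr h).neg_one_pow]
      ring
    · rw [(Nat.not_even_iff_odd.mp (mt even_iff_two_dvd.mp h)).neg_one_pow]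
      ring
  rw [← expand_eval, key]
  simp
  ring

lemma degree_contract_two_le {p : ℝ[X]} {N : ℕ} (hp : p.degree ≤ (2 * N : ℕ)) :
    (contract 2 p).degree ≤ N := by
  rw [degree_le_iff_coeff_zero]
  intro m hm
  rw [coeff_contract two_ne_zero]
  have hm' : N < m := by exact_mod_cast hm
  refine coeff_eq_zero_of_degree_lt (hp.trans_lt ?_)
  exact_mod_cast (by omega : 2 * N < m * 2)

/-- The minimax lower bound: every competitor of sup norm at most `M` has `1 / T_N a ≤ M`. -/
lemma one_div_eval_T_le {N : ℕ} {Δ M : ℝ} (hΔ0 : 0 < Δ) (hΔ1 : Δ < 1) {p : ℝ[X]}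
    (hdeg : p.degree ≤ (2 * N : ℕ)) (hp0 : p.eval 0 = 1)
    (hM : ∀ x : ℝ, Δ ≤ |x| → |x| ≤ 1 → |p.eval x| ≤ M) :
    1 / (Chebyshev.T ℝ N).eval ((1 + Δ ^ 2) / (1 - Δ ^ 2)) ≤ M := by
  have hd : 0 < 1 - Δ ^ 2 := by nlinarith
  have ha : 1 ≤ (1 + Δ ^ 2) / (1 - Δ ^ 2) := by
    rw [le_div_iff₀ hd]; nlinarith
  have hT := Chebyshev.one_le_eval_T_real N ha
  have hM0 : 0 ≤ M := (abs_nonneg _).trans (hM 1 (by simpa using hΔ1.le) (by simp))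
  -- Rescaling by some `m > M` instead of by `M` avoids dividing by zero.
  refine le_of_forall_gt_imp_ge_of_dense fun m hm => ?_
  have hm0 : 0 < m := hM0.trans_lt hm
  set q := contract 2 p with hq
  have hq0 : q.eval 0 = 1 := by
    have := eval_sq_contract_two p 0
    simpa [hp0] using this
  set l : ℝ[X] := C ((1 + Δ ^ 2) / 2) - C ((1 - Δ ^ 2) / 2) * X with hl
  have hldeg : l.natDegree ≤ 1 := by rw [hl]; compute_degree
  set P : ℝ[X] := C m⁻¹ * q.comp l with hP
  have hPdeg : P.degree ≤ N := by
    have hqd : q.natDegree ≤ N := natDegree_le_of_degree_le (degree_contract_two_le hdeg)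
    refine degree_le_of_natDegree_le ((natDegree_C_mul_le _ _).trans ?_)
    refine natDegree_comp_le.trans ?_
    simpa using Nat.mul_le_mul hqd hldeg
  have hPbnd : ∀ y ∈ Set.Icc (-1 : ℝ) 1, |P.eval y| ≤ 1 := by
    rintro y ⟨hy1, hy2⟩
    set t := (1 + Δ ^ 2) / 2 - (1 - Δ ^ 2) / 2 * y with ht
    have ht1 : Δ ^ 2 ≤ t := by nlinarith
    have ht2 : t ≤ 1 := by nlinarith
    have hx1 : Δ ≤ √t := Real.le_sqrt_of_sq_le ht1
    have hx2 : √t ≤ 1 := Real.sqrt_le_one.mpr ht2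
    have habs : |√t| = √t := abs_of_nonneg (Real.sqrt_nonneg t)
    have h1 := hM (√t) (by rwa [habs]) (by rwa [habs])
    have h2 := hM (-√t) (by rwa [abs_neg, habs]) (by rwa [abs_neg, habs])
    have hqt : q.eval t = (p.eval (√t) + p.eval (-√t)) / 2 := by
      rw [← eval_sq_contract_two, Real.sq_sqrt ((sq_nonneg Δ).trans ht1)]
    have hPt : P.eval y = m⁻¹ * q.eval t := by simp [hP, hl, ht]
    have hqM : |q.eval t| ≤ m := by
      rw [abs_le] at h1 h2 ⊢
      constructor <;> linarith
    rw [hPt, abs_mul, abs_of_pos (inv_pos.mpr hm0), inv_mul_le_iff₀ hm0, mul_one]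
    exact hqM
  have hla : l.eval ((1 + Δ ^ 2) / (1 - Δ ^ 2)) = 0 := by
    simp only [hl, eval_sub, eval_mul, eval_C, eval_X]
    field_simp
    ring
  have hPa : P.eval ((1 + Δ ^ 2) / (1 - Δ ^ 2)) = m⁻¹ := by
    rw [hP, eval_mul, eval_C, eval_comp, hla, hq0, mul_one]
  have h := Chebyshev.eval_iterate_derivative_le_of_forall_abs_le_one (k := 0) ha hPdeg hPbnd
  simp only [Function.iterate_zero, id_eq] at h
  rw [hPa] at h
  rw [one_div]
  exact inv_le_of_inv_le₀ hm0 h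

/-- The Chebyshev filter has sup norm `1 / T_N a`, attained at `x = Δ`. -/
lemma isGreatest_filter (N : ℕ) {Δ : ℝ} (hΔ0 : 0 < Δ) (hΔ1 : Δ < 1) {p : ℝ[X]}
    (hp : ∀ x : ℝ, p.eval x =
      (Chebyshev.T ℝ N).eval ((Δ ^ 2 + 1 - 2 * x ^ 2) / (1 - Δ ^ 2)) /
        (Chebyshev.T ℝ N).eval ((1 + Δ ^ 2) / (1 - Δ ^ 2))) :
    IsGreatest ((fun x => |p.eval x|) '' {x : ℝ | Δ ≤ |x| ∧ |x| ≤ 1})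
      (1 / (Chebyshev.T ℝ N).eval ((1 + Δ ^ 2) / (1 - Δ ^ 2))) := by
  have hd : 0 < 1 - Δ ^ 2 := by nlinarith
  have ha : 1 ≤ (1 + Δ ^ 2) / (1 - Δ ^ 2) := by
    rw [le_div_iff₀ hd]; nlinarith
  have hT : 0 < (Chebyshev.T ℝ N).eval ((1 + Δ ^ 2) / (1 - Δ ^ 2)) :=
    one_pos.trans_le (Chebyshev.one_le_eval_T_real N ha)
  constructor
  · refine ⟨Δ, ⟨le_abs_self Δ, by rw [abs_of_pos hΔ0]; exact hΔ1.le⟩, ?_⟩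
    have h1 : (Δ ^ 2 + 1 - 2 * Δ ^ 2) / (1 - Δ ^ 2) = 1 := by
      rw [div_eq_one_iff_eq hd.ne']; ring
    simp only [hp, h1, Chebyshev.T_eval_one]
    exact abs_of_pos (one_div_pos.mpr hT)
  · rintro _ ⟨x, ⟨hx1, hx2⟩, rfl⟩
    have hs1 : Δ ^ 2 ≤ x ^ 2 := by rw [← sq_abs x]; gcongr
    have hs2 : x ^ 2 ≤ 1 := by rw [← sq_abs x]; exact pow_le_one₀ (abs_nonneg x) hx2
    simp only [hp, abs_div, abs_of_pos hT]
    gcongr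
    refine Chebyshev.abs_eval_T_real_le_one N (abs_le.mpr ⟨?_, ?_⟩)
    · rw [le_div_iff₀ hd]; linarith
    · rw [div_le_iff₀ hd]; linarith

/-- **Polynomial Chebyshev minimax filter.**
Let `N ≥ 1` and `0 < Δ < 1`. The minimum, over all real polynomials `p` of degree at
most `2N` with `p 0 = 1`, of `sup_{Δ ≤ |x| ≤ 1} |p x|` equals
`1 / T_N ((1+Δ²)/(1-Δ²))`; moreover it is attained by the even polynomial
`x ↦ T_N ((Δ²+1-2x²)/(1-Δ²)) / T_N ((1+Δ²)/(1-Δ²))`. -/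
theorem chebyshev_minimax_polynomial_filter (N : ℕ) (hN : 1 ≤ N)
    (Δ : ℝ) (hΔ0 : 0 < Δ) (hΔ1 : Δ < 1) :
    IsLeast
      {s : ℝ | ∃ p : ℝ[X], p.degree ≤ (2 * N : ℕ) ∧ p.eval 0 = 1 ∧
        s = sSup ((fun x => |p.eval x|) '' {x : ℝ | Δ ≤ |x| ∧ |x| ≤ 1})}
      (1 / (Polynomial.Chebyshev.T ℝ N).eval ((1 + Δ ^ 2) / (1 - Δ ^ 2))) ∧
    ∃ p : ℝ[X], p.degree ≤ (2 * N : ℕ) ∧ p.eval 0 = 1 ∧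
      (∀ x : ℝ, p.eval x =
        (Polynomial.Chebyshev.T ℝ N).eval ((Δ ^ 2 + 1 - 2 * x ^ 2) / (1 - Δ ^ 2)) /
          (Polynomial.Chebyshev.T ℝ N).eval ((1 + Δ ^ 2) / (1 - Δ ^ 2))) ∧
      sSup ((fun x => |p.eval x|) '' {x : ℝ | Δ ≤ |x| ∧ |x| ≤ 1}) =
        1 / (Polynomial.Chebyshev.T ℝ N).eval ((1 + Δ ^ 2) / (1 - Δ ^ 2)) := by
  have hd : 0 < 1 - Δ ^ 2 := by nlinarith
  have ha : 1 ≤ (1 + Δ ^ 2) / (1 - Δ ^ 2) := by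
    rw [le_div_iff₀ hd]; nlinarith
  have hT : 0 < (Chebyshev.T ℝ N).eval ((1 + Δ ^ 2) / (1 - Δ ^ 2)) :=
    one_pos.trans_le (Chebyshev.one_le_eval_T_real N ha)
  set τ := (Chebyshev.T ℝ N).eval ((1 + Δ ^ 2) / (1 - Δ ^ 2)) with hτ
  set l : ℝ[X] := C ((Δ ^ 2 + 1) / (1 - Δ ^ 2)) - C (2 / (1 - Δ ^ 2)) * X ^ 2 with hl
  set p : ℝ[X] := C τ⁻¹ * (Chebyshev.T ℝ N).comp l with hp
  have hldeg : l.natDegree ≤ 2 := by rw [hl]; compute_degree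
  have hdeg : p.degree ≤ (2 * N : ℕ) := by
    refine degree_le_of_natDegree_le ((natDegree_C_mul_le _ _).trans ?_)
    refine natDegree_comp_le.trans ?_
    rw [Chebyshev.natDegree_T, Int.natAbs_natCast, mul_comm]
    exact Nat.mul_le_mul_right N hldeg
  have heval : ∀ x : ℝ, p.eval x =
      (Chebyshev.T ℝ N).eval ((Δ ^ 2 + 1 - 2 * x ^ 2) / (1 - Δ ^ 2)) / τ := by
    intro x
    have hlx : l.eval x = (Δ ^ 2 + 1 - 2 * x ^ 2) / (1 - Δ ^ 2) := by
      simp only [hl, eval_sub, eval_mul, eval_C, eval_pow, eval_X]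
      ring
    rw [hp, eval_mul, eval_C, eval_comp, hlx, mul_comm, ← div_eq_mul_inv]
  have hp0 : p.eval 0 = 1 := by
    have h0 : (Δ ^ 2 + 1 - 2 * (0 : ℝ) ^ 2) / (1 - Δ ^ 2) = (1 + Δ ^ 2) / (1 - Δ ^ 2) := by
      ring
    rw [heval, h0, ← hτ, div_self hT.ne']
  have hsup := (isGreatest_filter N hΔ0 hΔ1 heval).csSup_eq
  refine ⟨⟨⟨p, hdeg, hp0, hsup.symm⟩, ?_⟩, p, hdeg, hp0, heval, hsup⟩
  rintro _ ⟨r, hrdeg, hr0, rfl⟩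
  -- Boundedness of the values is what makes the real-valued `sSup` a genuine upper bound.
  have hbdd : BddAbove ((fun x => |r.eval x|) '' {x : ℝ | Δ ≤ |x| ∧ |x| ≤ 1}) := by
    have hcont : ContinuousOn (fun x => |r.eval x|) (Set.Icc (-1 : ℝ) 1) :=
      r.continuous.abs.continuousOn
    exact (isCompact_Icc.bddAbove_image hcont).mono
      (Set.image_mono fun x hx => abs_le.mp hx.2)
  exact one_div_eval_T_le hΔ0 hΔ1 hrdeg hr0
    fun x hx1 hx2 => le_csSup hbdd ⟨x, ⟨hx1, hx2⟩, rfl⟩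
end

section
/- Let N ≥ 1 be an integer and let 0 < Δ < 1. Then the minimum, over all real polynomials q of degree at most N satisfying q(1) = 1, of sup_{Δ ≤ |x| ≤ 1} |q(cos(πx))| equals 1/T_N(1 + 2 tan²(πΔ/2)), and it is attained by q(y) = T_N(1 + 2(y − cos(πΔ))/(1 + cos(πΔ))) / T_N(1 + 2 tan²(πΔ/2)). -/
/-!
The substitution `y = cos (π x)` maps `{x | Δ ≤ |x| ≤ 1}` onto `[-1, c]` with `c = cos (π Δ)`, so the
problem is to minimise the sup norm on `[-1, c]` among polynomials of degree at most `N` taking the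
value `1` at `1`. The affine map `y ↦ 1 + 2 (y - c) / (1 + c)` carries `[-1, c]` onto `[-1, 1]` and
`1` to `a = 1 + 2 tan² (π Δ / 2) > 1` (`one_add_two_mul_tan_sq`). The classical extremal property of
`T_N`, that `P a ≤ T_N a` for every `P` of degree at most `N` bounded by `1` on `[-1, 1]`, then gives
the lower bound `1 / T_N a` (`one_div_T_le_sSup`), and the rescaled `T_N` attains it because
`|T_N| ≤ 1` on `[-1, 1]`.
-/

open Polynomial Real

namespace TrigFilter

/-- The stopband is mapped by `x ↦ cos (π x)` into `[-1, cos (π Δ)]`. -/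
lemma cos_mem {Δ : ℝ} (hΔ0 : 0 < Δ) {x : ℝ} (hx : Δ ≤ |x| ∧ |x| ≤ 1) :
    -1 ≤ cos (π * x) ∧ cos (π * x) ≤ cos (π * Δ) := by
  refine ⟨neg_one_le_cos _, ?_⟩
  have h : cos (π * x) = cos (π * |x|) := by
    rw [← cos_abs (π * x), abs_mul, abs_of_pos pi_pos]
  rw [h]
  exact cos_le_cos_of_nonneg_of_le_pi (by positivity)
    (by nlinarith [pi_pos, hx.2]) (by nlinarith [pi_pos, hx.1])

/-- Every point of `[-1, cos (π Δ)]` is `cos (π x)` for some `x` in the stopband. -/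
lemma exists_cos_eq {Δ : ℝ} (hΔ0 : 0 < Δ) (hΔ1 : Δ < 1) {y : ℝ} (h1 : -1 ≤ y)
    (h2 : y ≤ cos (π * Δ)) : ∃ x : ℝ, (Δ ≤ |x| ∧ |x| ≤ 1) ∧ cos (π * x) = y := by
  have hpi := pi_pos
  have hnn : 0 ≤ arccos y / π := div_nonneg (arccos_nonneg y) hpi.le
  refine ⟨arccos y / π, ?_, ?_⟩
  · rw [abs_of_nonneg hnn, le_div_iff₀ hpi, div_le_one hpi]
    refine ⟨?_, arccos_le_pi y⟩
    have h := arccos_le_arccos h2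
    rw [arccos_cos (by positivity) (by nlinarith)] at h
    linarith
  · rw [mul_div_cancel₀ _ hpi.ne']
    exact cos_arccos h1 (h2.trans (cos_le_one _))

lemma one_add_cos_pos {Δ : ℝ} (hΔ0 : 0 < Δ) (hΔ1 : Δ < 1) : 0 < 1 + cos (π * Δ) := by
  have hpi := pi_pos
  have h := cos_lt_cos_of_nonneg_of_le_pi (x := π * Δ) (y := π) (by positivity) le_rfl
    (by nlinarith)
  rw [cos_pi] at h
  linarith

/-- The image of `y = 1` under the affine map carrying `[-1, cos (π Δ)]` onto `[-1, 1]`. -/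
lemma one_add_two_mul_tan_sq {Δ : ℝ} (hΔ0 : 0 < Δ) (hΔ1 : Δ < 1) :
    1 + 2 * tan (π * Δ / 2) ^ 2 = 1 + 2 * (1 - cos (π * Δ)) / (1 + cos (π * Δ)) := by
  have hpos := one_add_cos_pos hΔ0 hΔ1
  have h2 : cos (π * Δ) = 2 * cos (π * Δ / 2) ^ 2 - 1 := by
    rw [← cos_two_mul]; congr 1; ring
  have hs := sin_sq_add_cos_sq (π * Δ / 2)
  have hc : cos (π * Δ / 2) ≠ 0 := by
    intro h
    rw [h2, h] at hpos
    norm_num at hpos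
  have hs' : sin (π * Δ / 2) ^ 2 = 1 - cos (π * Δ / 2) ^ 2 := by linarith
  have h3 : 1 + (2 * cos (π * Δ / 2) ^ 2 - 1) ≠ 0 := by
    rw [← h2]; exact hpos.ne'
  rw [tan_eq_sin_div_cos, div_pow, hs', h2]
  field_simp
  ring

/-- The supremum in the statement is taken over a set that is bounded above. -/
lemma bddAbove_image (q : ℝ[X]) (Δ : ℝ) :
    BddAbove ((fun x => |q.eval (cos (π * x))|) '' {x : ℝ | Δ ≤ |x| ∧ |x| ≤ 1}) := by
  have hc : Continuous fun x : ℝ => |q.eval (cos (π * x))| :=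
    (q.continuous.comp (by fun_prop)).abs
  refine (isCompact_Icc.bddAbove_image (K := Set.Icc (-1 : ℝ) 1) hc.continuousOn).mono
    (Set.image_mono ?_)
  intro x hx
  exact abs_le.mp hx.2

lemma one_div_T_le_sSup (N : ℕ) {Δ : ℝ} (hΔ0 : 0 < Δ) (hΔ1 : Δ < 1) {q : ℝ[X]}
    (hdeg : q.degree ≤ (N : ℕ)) (hq : q.eval 1 = 1) :
    1 / (Chebyshev.T ℝ N).eval (1 + 2 * tan (π * Δ / 2) ^ 2) ≤
      sSup ((fun x => |q.eval (cos (π * x))|) '' {x : ℝ | Δ ≤ |x| ∧ |x| ≤ 1}) := by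
  have hpos := one_add_cos_pos hΔ0 hΔ1
  have ha : 1 ≤ 1 + 2 * tan (π * Δ / 2) ^ 2 := by nlinarith [sq_nonneg (tan (π * Δ / 2))]
  have hT := Chebyshev.one_le_eval_T_real N ha
  have hsup0 : 0 ≤ sSup ((fun x => |q.eval (cos (π * x))|) '' {x : ℝ | Δ ≤ |x| ∧ |x| ≤ 1}) := by
    apply Real.sSup_nonneg
    rintro _ ⟨x, -, rfl⟩
    positivity
  -- Comparing with every `M` above the supremum avoids dividing by a supremum that might be zero.
  refine le_of_forall_gt_imp_ge_of_dense fun M hM => ?_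
  have hM0 : 0 < M := hsup0.trans_lt hM
  -- `P` is `q / M` transported from `[-1, cos (π Δ)]` to `[-1, 1]`.
  let P : ℝ[X] := C M⁻¹ *
    q.comp (C ((1 + cos (π * Δ)) / 2) * X + C (cos (π * Δ) - (1 + cos (π * Δ)) / 2))
  have heval : ∀ t, P.eval t =
      M⁻¹ * q.eval ((1 + cos (π * Δ)) / 2 * t + (cos (π * Δ) - (1 + cos (π * Δ)) / 2)) := by
    intro t
    simp [P]
  have hPdeg : P.degree ≤ N := by
    rw [← natDegree_le_iff_degree_le] at hdeg ⊢
    refine (natDegree_C_mul_le _ _).trans (natDegree_comp_le.trans ?_)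
    calc _ ≤ q.natDegree * 1 := Nat.mul_le_mul_left _ natDegree_linear_le
      _ ≤ N := by rwa [mul_one]
  have hPbd : ∀ t ∈ Set.Icc (-1 : ℝ) 1, |P.eval t| ≤ 1 := by
    intro t ht
    obtain ⟨x, hx, hxy⟩ := exists_cos_eq hΔ0 hΔ1
      (y := (1 + cos (π * Δ)) / 2 * t + (cos (π * Δ) - (1 + cos (π * Δ)) / 2))
      (by nlinarith [ht.1]) (by nlinarith [ht.2])
    have h := le_csSup (bddAbove_image q Δ) (Set.mem_image_of_mem _ hx)
    simp only [hxy] at h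
    rw [heval, abs_mul, abs_of_pos (inv_pos.mpr hM0), inv_mul_le_one₀ hM0]
    exact h.trans hM.le
  have key := Chebyshev.eval_iterate_derivative_le_of_forall_abs_le_one (k := 0) ha hPdeg hPbd
  simp only [Function.iterate_zero, id_eq] at key
  rw [heval] at key
  have h1 : (1 + cos (π * Δ)) / 2 * (1 + 2 * tan (π * Δ / 2) ^ 2) +
      (cos (π * Δ) - (1 + cos (π * Δ)) / 2) = 1 := by
    rw [one_add_two_mul_tan_sq hΔ0 hΔ1]
    field_simp
    ring
  rw [h1, hq, mul_one] at key
  rw [one_div]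
  exact inv_le_of_inv_le₀ hM0 key

lemma exists_extremal (N : ℕ) {Δ : ℝ} (hΔ0 : 0 < Δ) (hΔ1 : Δ < 1) :
    ∃ q : ℝ[X], q.degree ≤ (N : ℕ) ∧ q.eval 1 = 1 ∧
      (∀ y : ℝ, q.eval y =
        (Chebyshev.T ℝ N).eval (1 + 2 * (y - cos (π * Δ)) / (1 + cos (π * Δ))) /
          (Chebyshev.T ℝ N).eval (1 + 2 * tan (π * Δ / 2) ^ 2)) ∧
      sSup ((fun x => |q.eval (cos (π * x))|) '' {x : ℝ | Δ ≤ |x| ∧ |x| ≤ 1}) =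
        1 / (Chebyshev.T ℝ N).eval (1 + 2 * tan (π * Δ / 2) ^ 2) := by
  have hpos := one_add_cos_pos hΔ0 hΔ1
  have ha : 1 ≤ 1 + 2 * tan (π * Δ / 2) ^ 2 := by nlinarith [sq_nonneg (tan (π * Δ / 2))]
  have hT := Chebyshev.one_le_eval_T_real N ha
  set D := (Chebyshev.T ℝ N).eval (1 + 2 * tan (π * Δ / 2) ^ 2) with hD
  have hD0 : 0 < D := by linarith
  let q : ℝ[X] := C D⁻¹ * (Chebyshev.T ℝ N).comp
    (C (2 / (1 + cos (π * Δ))) * X + C (1 - 2 * cos (π * Δ) / (1 + cos (π * Δ))))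
  have heval : ∀ y : ℝ, q.eval y =
      (Chebyshev.T ℝ N).eval (1 + 2 * (y - cos (π * Δ)) / (1 + cos (π * Δ))) / D := by
    intro y
    have : 2 / (1 + cos (π * Δ)) * y + (1 - 2 * cos (π * Δ) / (1 + cos (π * Δ))) =
        1 + 2 * (y - cos (π * Δ)) / (1 + cos (π * Δ)) := by
      ring
    simp only [q, eval_mul, eval_C, eval_comp, eval_add, eval_X, this]
    exact (div_eq_inv_mul _ _).symm
  have hdeg : q.degree ≤ (N : ℕ) := by
    rw [← natDegree_le_iff_degree_le]
    refine (natDegree_C_mul_le _ _).trans (natDegree_comp_le.trans ?_)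
    calc _ ≤ (Chebyshev.T ℝ N).natDegree * 1 := Nat.mul_le_mul_left _ natDegree_linear_le
      _ ≤ N := by simp
  have hq : q.eval 1 = 1 := by
    rw [heval, ← one_add_two_mul_tan_sq hΔ0 hΔ1, ← hD, div_self hD0.ne']
  refine ⟨q, hdeg, hq, heval, le_antisymm ?_ (one_div_T_le_sSup N hΔ0 hΔ1 hdeg hq)⟩
  refine csSup_le (Set.Nonempty.image _ ⟨1, by simp [hΔ1.le]⟩) ?_
  rintro _ ⟨x, hx, rfl⟩
  obtain ⟨h1, h2⟩ := cos_mem hΔ0 hx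
  simp only [heval, abs_div, abs_of_pos hD0]
  gcongr
  apply Chebyshev.abs_eval_T_real_le_one
  have h3 : -2 ≤ 2 * (cos (π * x) - cos (π * Δ)) / (1 + cos (π * Δ)) := by
    rw [le_div_iff₀ hpos]; linarith
  have h4 : 2 * (cos (π * x) - cos (π * Δ)) / (1 + cos (π * Δ)) ≤ 0 :=
    div_nonpos_of_nonpos_of_nonneg (by linarith) hpos.le
  rw [abs_le]
  constructor <;> linarith

end TrigFilter

/-- **Trigonometric (Dolph–Chebyshev) minimax filter.**
Let `N ≥ 1` and `0 < Δ < 1`. The minimum, over all real polynomials `q` of degree at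
most `N` with `q 1 = 1`, of `sup_{Δ ≤ |x| ≤ 1} |q (cos (π x))|` equals
`1 / T_N (1 + 2 tan² (πΔ/2))`; moreover it is attained by
`q = y ↦ T_N (1 + 2(y - cos(πΔ))/(1 + cos(πΔ))) / T_N (1 + 2 tan²(πΔ/2))`. -/
theorem chebyshev_minimax_trigonometric_filter (N : ℕ) (hN : 1 ≤ N)
    (Δ : ℝ) (hΔ0 : 0 < Δ) (hΔ1 : Δ < 1) :
    IsLeast
      {s : ℝ | ∃ q : ℝ[X], q.degree ≤ (N : ℕ) ∧ q.eval 1 = 1 ∧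
        s = sSup ((fun x => |q.eval (Real.cos (π * x))|) '' {x : ℝ | Δ ≤ |x| ∧ |x| ≤ 1})}
      (1 / (Polynomial.Chebyshev.T ℝ N).eval (1 + 2 * Real.tan (π * Δ / 2) ^ 2)) ∧
    ∃ q : ℝ[X], q.degree ≤ (N : ℕ) ∧ q.eval 1 = 1 ∧
      (∀ y : ℝ, q.eval y =
        (Polynomial.Chebyshev.T ℝ N).eval
            (1 + 2 * (y - Real.cos (π * Δ)) / (1 + Real.cos (π * Δ))) /
          (Polynomial.Chebyshev.T ℝ N).eval (1 + 2 * Real.tan (π * Δ / 2) ^ 2)) ∧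
      sSup ((fun x => |q.eval (Real.cos (π * x))|) '' {x : ℝ | Δ ≤ |x| ∧ |x| ≤ 1}) =
        1 / (Polynomial.Chebyshev.T ℝ N).eval (1 + 2 * Real.tan (π * Δ / 2) ^ 2) := by
  obtain ⟨q, hdeg, hq, heval, hsup⟩ := TrigFilter.exists_extremal N hΔ0 hΔ1
  refine ⟨⟨⟨q, hdeg, hq, hsup.symm⟩, ?_⟩, q, hdeg, hq, heval, hsup⟩
  rintro _ ⟨p, hpdeg, hp, rfl⟩
  exact TrigFilter.one_div_T_le_sSup N hΔ0 hΔ1 hpdeg hp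
end

section
/- For every integer N ≥ 1 and every real θ with 0 < θ < π/2, one has T_N(1 + 2 tan²θ) > (1/2)((1 + sin θ)/(1 − sin θ))^N ≥ (1/2) e^{2Nθ}; consequently, for 0 < Δ < 1, taking θ = πΔ/2, the minimax rejection level of the degree-N trigonometric Chebyshev filter satisfies 1/T_N(1 + 2 tan²(πΔ/2)) < 2 e^{−πNΔ}. -/
open Polynomial Real

/-!
Put `w = (1 + sin θ) / (1 - sin θ)`. Then `w > 0` and `(w + w⁻¹) / 2 = 1 + 2 tan² θ`, so writing
`w = exp t` the Chebyshev value is `T_N (cosh t) = cosh (N t) = (w ^ N + w⁻¹ ^ N) / 2`, which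
exceeds `w ^ N / 2` strictly (`half_pow_lt_eval_T`, `half_add_inv_ratio`).

For the exponential bound, `log w - 2 θ` vanishes at `θ = 0` and has derivative
`2 / cos θ - 2 ≥ 0` on `[0, π / 2)`, so `exp (2 θ) ≤ w` (`exp_two_mul_le_ratio`). The bound on
the rejection level is the reciprocal of the two inequalities combined, at `θ = π Δ / 2`.
-/

/-- Strict because the discarded term `w⁻¹ ^ N / 2` of the exact value is positive. -/
theorem half_pow_lt_eval_T (N : ℕ) {w : ℝ} (hw : 0 < w) :
    (1 / 2) * w ^ N < (Polynomial.Chebyshev.T ℝ N).eval ((w + w⁻¹) / 2) := by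
  have h := Polynomial.Chebyshev.T_real_cosh (Real.log w) N
  rw [Real.cosh_log hw] at h
  rw [h, Real.cosh_eq, Int.cast_natCast, Real.exp_nat_mul, Real.exp_log hw]
  have := Real.exp_pos (-(N * Real.log w))
  linarith

theorem sin_lt_one_of_mem {θ : ℝ} (h0 : 0 ≤ θ) (h1 : θ < π / 2) : Real.sin θ < 1 := by
  rw [← Real.sin_pi_div_two]
  exact Real.sin_lt_sin_of_lt_of_le_pi_div_two (by linarith) le_rfl h1

theorem sin_nonneg_of_mem {θ : ℝ} (h0 : 0 ≤ θ) (h1 : θ < π / 2) : 0 ≤ Real.sin θ :=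
  Real.sin_nonneg_of_nonneg_of_le_pi h0 (by linarith [Real.pi_pos])

theorem half_add_inv_ratio {θ : ℝ} (h0 : 0 ≤ θ) (h1 : θ < π / 2) :
    ((1 + Real.sin θ) / (1 - Real.sin θ) + ((1 + Real.sin θ) / (1 - Real.sin θ))⁻¹) / 2 =
      1 + 2 * Real.tan θ ^ 2 := by
  have hs := sin_lt_one_of_mem h0 h1
  have hs0 := sin_nonneg_of_mem h0 h1
  have ha : 1 - Real.sin θ ≠ 0 := by linarith
  have hb : 1 + Real.sin θ ≠ 0 := by linarith
  have hc : Real.cos θ ^ 2 = (1 - Real.sin θ) * (1 + Real.sin θ) := by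
    rw [Real.cos_sq']; ring
  rw [Real.tan_eq_sin_div_cos, div_pow, hc]
  field_simp
  ring

theorem exp_two_mul_le_ratio {θ : ℝ} (h0 : 0 ≤ θ) (h1 : θ < π / 2) :
    Real.exp (2 * θ) ≤ (1 + Real.sin θ) / (1 - Real.sin θ) := by
  have hderiv : ∀ x : ℝ, 0 ≤ x → x < π / 2 →
      HasDerivAt (fun y => Real.log (1 + Real.sin y) - Real.log (1 - Real.sin y) - 2 * y)
        (2 / Real.cos x - 2) x := by
    intro x hx0 hx1
    have hs := sin_lt_one_of_mem hx0 hx1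
    have hs0 := sin_nonneg_of_mem hx0 hx1
    have ha : 1 - Real.sin x ≠ 0 := by linarith
    have hb : 1 + Real.sin x ≠ 0 := by linarith
    have hcos : 0 < Real.cos x := Real.cos_pos_of_mem_Ioo ⟨by linarith, hx1⟩
    have h := ((((Real.hasDerivAt_sin x).const_add 1).log hb).sub
      (((Real.hasDerivAt_sin x).const_sub 1).log ha)).sub ((hasDerivAt_id x).const_mul 2)
    refine h.congr_deriv ?_
    have hsq := Real.sin_sq_add_cos_sq x
    field_simp
    linear_combination 2 * hsq
  have hmono : MonotoneOn
      (fun y => Real.log (1 + Real.sin y) - Real.log (1 - Real.sin y) - 2 * y)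
      (Set.Ico 0 (π / 2)) := by
    refine monotoneOn_of_hasDerivWithinAt_nonneg (f' := fun x => 2 / Real.cos x - 2)
      (convex_Ico _ _) (fun x hx => (hderiv x hx.1 hx.2).continuousAt.continuousWithinAt) ?_ ?_
    · intro x hx
      rw [interior_Ico] at hx
      exact (hderiv x hx.1.le hx.2).hasDerivWithinAt
    · intro x hx
      rw [interior_Ico] at hx
      have hcos : 0 < Real.cos x := Real.cos_pos_of_mem_Ioo ⟨by linarith [hx.1], hx.2⟩
      have : 2 ≤ 2 / Real.cos x := by
        rw [le_div_iff₀ hcos]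
        linarith [Real.cos_le_one x]
      linarith
  have hs := sin_lt_one_of_mem h0 h1
  have hs0 := sin_nonneg_of_mem h0 h1
  have hle := hmono ⟨le_rfl, by linarith⟩ ⟨h0, h1⟩ h0
  simp only [Real.sin_zero, add_zero, sub_zero, Real.log_one, mul_zero] at hle
  rw [← Real.le_log_iff_exp_le (div_pos (by linarith) (by linarith)),
    Real.log_div (by linarith) (by linarith)]
  linarith

/-- For every integer `N ≥ 1` and every `0 < θ < π/2`:
`T_N (1 + 2 tan² θ) > (1/2) ((1 + sin θ)/(1 - sin θ))^N ≥ (1/2) e^{2Nθ}`;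
consequently, for `0 < Δ < 1`, taking `θ = πΔ/2`, the minimax rejection level of the
degree-`N` trigonometric Chebyshev filter satisfies
`1 / T_N (1 + 2 tan²(πΔ/2)) < 2 e^{-πNΔ}`. -/
theorem trigonometric_chebyshev_filter_rejection (N : ℕ) (hN : 1 ≤ N) :
    (∀ θ : ℝ, 0 < θ → θ < π / 2 →
      (1 / 2) * ((1 + Real.sin θ) / (1 - Real.sin θ)) ^ N <
          (Polynomial.Chebyshev.T ℝ N).eval (1 + 2 * Real.tan θ ^ 2) ∧
      (1 / 2) * Real.exp (2 * N * θ) ≤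
          (1 / 2) * ((1 + Real.sin θ) / (1 - Real.sin θ)) ^ N) ∧
    (∀ Δ : ℝ, 0 < Δ → Δ < 1 →
      1 / (Polynomial.Chebyshev.T ℝ N).eval (1 + 2 * Real.tan (π * Δ / 2) ^ 2) <
        2 * Real.exp (-(π * N * Δ))) := by
  have key : ∀ θ : ℝ, 0 < θ → θ < π / 2 →
      (1 / 2) * ((1 + Real.sin θ) / (1 - Real.sin θ)) ^ N <
          (Polynomial.Chebyshev.T ℝ N).eval (1 + 2 * Real.tan θ ^ 2) ∧
      (1 / 2) * Real.exp (2 * N * θ) ≤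
          (1 / 2) * ((1 + Real.sin θ) / (1 - Real.sin θ)) ^ N := by
    intro θ h0 h1
    have hexp := exp_two_mul_le_ratio h0.le h1
    constructor
    · rw [← half_add_inv_ratio h0.le h1]
      exact half_pow_lt_eval_T N ((Real.exp_pos _).trans_le hexp)
    · have hpow : Real.exp (2 * N * θ) = Real.exp (2 * θ) ^ N := by
        rw [← Real.exp_nat_mul]
        ring_nf
      rw [hpow]
      gcongr
  refine ⟨key, fun Δ h0 h1 => ?_⟩
  obtain ⟨hT, hexp⟩ := key (π * Δ / 2) (by positivity) (by nlinarith [Real.pi_pos])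
  have hlt := hexp.trans_lt hT
  have harg : 2 * (N : ℝ) * (π * Δ / 2) = π * N * Δ := by ring
  rw [harg] at hlt
  calc _ < 1 / ((1 / 2) * Real.exp (π * N * Δ)) :=
        one_div_lt_one_div_of_lt (by positivity) hlt
    _ = 2 * Real.exp (-(π * N * Δ)) := by
        rw [Real.exp_neg]
        field_simp
end
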